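/- arXiv:2310.19073 — 3 statements merged into one kernel-verified Lean document; each statement's English description precedes it below -/
import Mathlib

section
/- Let μ₊ > 0 and set ρ₋ = (1 + 2μ₊)/(1 + 3μ₊). Let a, b, c be real numbers with a > b > c, and define b' = b - μ₊(c - b) and c' = c - μ₊(b - c). Then max(|a - b'|, |b' - c'|) ≥ ρ₋ (a - b). -/
/-!
A repulsion moves `b` by `μ₊ |b - c|` and stretches the gap `|b - c|` by the factor `1 + 2μ₊`.
If `M` bounds both new distances, the gap `|b - c|` was therefore at most `M / (1 + 2μ₊)`, and
the triangle inequality through `b'` gives `|a - b| ≤ M + μ₊ M / (1 + 2μ₊) = M / ρ₋`.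
-/

section Repel

variable {R E : Type*} [Ring R] [AddCommGroup E] [Module R E]

/-- The opinion of an individual holding `x` after a repulsive interaction, with divergence
parameter `μ`, with an incompatible individual holding `y`: thus `b'` is `repel μ₊ b c` and
`c'` is `repel μ₊ c b`. Opinions may be vectors. -/
def repel (μ : R) (x y : E) : E := x - μ • (y - x)

theorem repel_sub_self (μ : R) (x y : E) : repel μ x y - x = μ • (x - y) := by
  rw [repel, sub_sub_cancel_left, ← smul_neg, neg_sub]

theorem repel_sub_repel_swap (μ : R) (x y : E) :
    repel μ x y - repel μ y x = (1 + 2 * μ) • (x - y) := by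
  simp only [repel, add_smul, two_mul, one_smul, smul_sub]
  abel

end Repel

section Norm

variable {𝕜 E : Type*} [NormedField 𝕜] [SeminormedAddCommGroup E] [NormedSpace 𝕜 E]

theorem norm_repel_sub_self (μ : 𝕜) (x y : E) : ‖repel μ x y - x‖ = ‖μ‖ * ‖x - y‖ := by
  rw [repel_sub_self, norm_smul]

theorem norm_repel_sub_repel_swap (μ : 𝕜) (x y : E) :
    ‖repel μ x y - repel μ y x‖ = ‖1 + 2 * μ‖ * ‖x - y‖ := by
  rw [repel_sub_repel_swap, norm_smul]

theorem norm_mul_norm_sub_le_mul_max_repel (μ : 𝕜) (a b c : E) :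
    ‖1 + 2 * μ‖ * ‖a - b‖ ≤
      (‖1 + 2 * μ‖ + ‖μ‖) * max ‖a - repel μ b c‖ ‖repel μ b c - repel μ c b‖ := by
  have triangle : ‖a - b‖ ≤ ‖a - repel μ b c‖ + ‖μ‖ * ‖b - c‖ := by
    rw [← norm_repel_sub_self]
    exact norm_sub_le_norm_sub_add_norm_sub _ _ _
  calc ‖1 + 2 * μ‖ * ‖a - b‖
      ≤ ‖1 + 2 * μ‖ * (‖a - repel μ b c‖ + ‖μ‖ * ‖b - c‖) := by gcongr
    _ = ‖1 + 2 * μ‖ * ‖a - repel μ b c‖ + ‖μ‖ * ‖repel μ b c - repel μ c b‖ := by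
      rw [norm_repel_sub_repel_swap]; ring
    _ ≤ ‖1 + 2 * μ‖ * max ‖a - repel μ b c‖ ‖repel μ b c - repel μ c b‖ +
          ‖μ‖ * max ‖a - repel μ b c‖ ‖repel μ b c - repel μ c b‖ := by
      gcongr
      exacts [le_max_left _ _, le_max_right _ _]
    _ = _ := (add_mul _ _ _).symm

end Norm

theorem stmt_3_general {E : Type*} [SeminormedAddCommGroup E] [NormedSpace ℝ E] {μ : ℝ}
    (hμ : 0 ≤ μ) (a b c : E) :
    (1 + 2 * μ) / (1 + 3 * μ) * ‖a - b‖ ≤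
      max ‖a - repel μ b c‖ ‖repel μ b c - repel μ c b‖ := by
  have norm_μ : ‖μ‖ = μ := Real.norm_of_nonneg hμ
  have norm_stretch : ‖1 + 2 * μ‖ = 1 + 2 * μ := Real.norm_of_nonneg (by positivity)
  have weighted := norm_mul_norm_sub_le_mul_max_repel μ a b c
  rw [norm_μ, norm_stretch, show 1 + 2 * μ + μ = 1 + 3 * μ by ring] at weighted
  rwa [div_mul_eq_mul_div, div_le_iff₀' (by positivity)]

/-- Lemma 3.4: with `ρ₋ = (1 + 2μ₊)/(1 + 3μ₊)`, if `a > b > c` and a repulsive interaction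
moves `b, c` to `b' = b - μ₊(c - b)`, `c' = c - μ₊(b - c)`, then
`max(|a - b'|, |b' - c'|) ≥ ρ₋ (a - b)`. -/
theorem stmt_3 (μp : ℝ) (hμp : 0 < μp) (ρm : ℝ) (hρm : ρm = (1 + 2*μp) / (1 + 3*μp))
    (a b c : ℝ) (hab : b < a) (hbc : c < b)
    (b' c' : ℝ) (hb' : b' = b - μp * (c - b)) (hc' : c' = c - μp * (b - c)) :
    ρm * (a - b) ≤ max |a - b'| |b' - c'| := by
  subst hρm hb' hc'
  calc (1 + 2 * μp) / (1 + 3 * μp) * (a - b)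
      ≤ (1 + 2 * μp) / (1 + 3 * μp) * |a - b| := by gcongr; exact le_abs_self _
    _ ≤ _ := stmt_3_general hμp.le a b c
end

section
/- Let θ > 0, μ₋ > 0, μ₊ > 0, set ρ₋ = (1 + 2μ₊)/(1 + 3μ₊) and D = (3 + 1/μ₊)μ₋θ. Let a, b, c be real numbers with |a - b| > D, and let (b'', c'') be the result of one Deffuant interaction with attraction and repulsion between opinions b and c: if |b - c| ≤ θ then b'' = b + μ₋(c - b) and c'' = c + μ₋(b - c), while if |b - c| > θ then b'' = b - μ₊(c - b) and c'' = c - μ₊(b - c). Then max(|a - b''|, |b'' - c''|) ≥ ρ₋ |a - b|. -/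
/-!
Put `t = |a - b| / (1 + 3μ₊)`, so that `ρ₋ |a - b| = |a - b| - μ₊ t`: the gap between `a` and `b`
survives up to the factor `ρ₋` as soon as `b` moves by at most `μ₊ t`. Under attraction `b` moves
by at most `μ₋ θ`, which is at most `μ₊ t` precisely when `|a - b| ≥ D`. Under repulsion `b` moves
by `μ₊ |b - c|`, which is fine if `|b - c| ≤ t`; otherwise the gap between `b` and `c`, which
repulsion multiplies by `1 + 2μ₊`, ends up at least `(1 + 2μ₊) t = ρ₋ |a - b|`.
-/

theorem mul_dist_le_dist_of_dist_le {X : Type*} [PseudoMetricSpace X] {r : ℝ} {a b b' : X}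
    (h : dist b' b ≤ (1 - r) * dist a b) : r * dist a b ≤ dist a b' := by
  linarith [dist_triangle a b' b]

namespace Deffuant

variable {E : Type*} [SeminormedAddCommGroup E] [NormedSpace ℝ E] {θ μm μp : ℝ} {a b c : E}

/-- The opinion of an individual holding opinion `b` after one interaction with a neighbor holding
opinion `c`, in the Deffuant model with attraction and repulsion: confidence threshold `θ`,
convergent parameter `μm` and divergent parameter `μp`. The neighbor's new opinion is obtained by
exchanging `b` and `c`. Opinions may be vectors, disagreement being measured by the norm. -/
noncomputable def update (θ μm μp : ℝ) (b c : E) : E :=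
  if ‖b - c‖ ≤ θ then b + μm • (c - b) else b - μp • (c - b)

/-- The factor `ρ₋` of the paper, by which a large gap shrinks at most. -/
noncomputable def gapFactor (μp : ℝ) : ℝ :=
  (1 + 2 * μp) / (1 + 3 * μp)

/-- The threshold `D` of the paper, above which a gap counts as large. -/
noncomputable def gapThreshold (θ μm μp : ℝ) : ℝ :=
  (3 + 1 / μp) * μm * θ

theorem one_sub_gapFactor (hμp : 0 ≤ μp) : 1 - gapFactor μp = μp / (1 + 3 * μp) := by
  unfold gapFactor
  field_simp
  ring

theorem one_sub_gapFactor_mul_gapThreshold (hμp : 0 < μp) :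
    (1 - gapFactor μp) * gapThreshold θ μm μp = μm * θ := by
  rw [one_sub_gapFactor hμp.le, gapThreshold]
  field_simp
  ring

theorem update_of_le (h : ‖b - c‖ ≤ θ) : update θ μm μp b c = b + μm • (c - b) :=
  if_pos h

theorem update_of_lt (h : θ < ‖b - c‖) : update θ μm μp b c = b - μp • (c - b) :=
  if_neg h.not_ge

theorem eq_update_and_eq_update_iff {b' c' : E} :
    b' = update θ μm μp b c ∧ c' = update θ μm μp c b ↔
      (‖b - c‖ ≤ θ → b' = b + μm • (c - b) ∧ c' = c + μm • (b - c)) ∧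
      (θ < ‖b - c‖ → b' = b - μp • (c - b) ∧ c' = c - μp • (b - c)) := by
  rcases le_or_gt ‖b - c‖ θ with h | h
  · rw [update_of_le h, update_of_le (norm_sub_rev b c ▸ h)]
    simp only [h, h.not_gt, true_imp_iff, false_imp_iff, and_true]
  · rw [update_of_lt h, update_of_lt (norm_sub_rev b c ▸ h)]
    simp only [h, h.not_ge, true_imp_iff, false_imp_iff, true_and]

theorem dist_update_self_of_le (hμm : 0 ≤ μm) (h : ‖b - c‖ ≤ θ) :
    dist (update θ μm μp b c) b = μm * ‖b - c‖ := by
  rw [update_of_le h, dist_eq_norm, add_sub_cancel_left, norm_smul_of_nonneg hμm, norm_sub_rev]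

theorem dist_update_self_of_lt (hμp : 0 ≤ μp) (h : θ < ‖b - c‖) :
    dist (update θ μm μp b c) b = μp * ‖b - c‖ := by
  rw [update_of_lt h, dist_eq_norm, sub_sub_cancel_left, norm_neg, norm_smul_of_nonneg hμp,
    norm_sub_rev]

theorem norm_update_sub_update_of_lt (hμp : 0 ≤ μp) (h : θ < ‖b - c‖) :
    ‖update θ μm μp b c - update θ μm μp c b‖ = (1 + 2 * μp) * ‖b - c‖ := by
  have hdiff : update θ μm μp b c - update θ μm μp c b = (1 + 2 * μp) • (b - c) := by
    rw [update_of_lt h, update_of_lt (norm_sub_rev b c ▸ h)]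
    module
  rw [hdiff, norm_smul_of_nonneg (by positivity)]

theorem gapFactor_mul_norm_sub_le_of_le (hμm : 0 ≤ μm) (hμp : 0 < μp) (h : ‖b - c‖ ≤ θ)
    (hab : gapThreshold θ μm μp ≤ ‖a - b‖) :
    gapFactor μp * ‖a - b‖ ≤ ‖a - update θ μm μp b c‖ := by
  simp only [← dist_eq_norm a] at hab ⊢
  have hfactor : 0 ≤ 1 - gapFactor μp := by
    rw [one_sub_gapFactor hμp.le]
    positivity
  apply mul_dist_le_dist_of_dist_le
  calc dist (update θ μm μp b c) b = μm * ‖b - c‖ := dist_update_self_of_le hμm h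
    _ ≤ μm * θ := by gcongr
    _ = (1 - gapFactor μp) * gapThreshold θ μm μp :=
        (one_sub_gapFactor_mul_gapThreshold hμp).symm
    _ ≤ (1 - gapFactor μp) * dist a b := by gcongr

theorem gapFactor_mul_norm_sub_le_max_of_lt (hμp : 0 ≤ μp) (h : θ < ‖b - c‖) :
    gapFactor μp * ‖a - b‖ ≤
      max ‖a - update θ μm μp b c‖ ‖update θ μm μp b c - update θ μm μp c b‖ := by
  rcases le_total ‖b - c‖ (‖a - b‖ / (1 + 3 * μp)) with hbc | hbc
  · apply le_max_of_le_left
    simp only [← dist_eq_norm a] at hbc ⊢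
    apply mul_dist_le_dist_of_dist_le
    calc dist (update θ μm μp b c) b = μp * ‖b - c‖ := dist_update_self_of_lt hμp h
      _ ≤ μp * (dist a b / (1 + 3 * μp)) := by gcongr
      _ = (1 - gapFactor μp) * dist a b := by rw [one_sub_gapFactor hμp]; ring
  · apply le_max_of_le_right
    calc gapFactor μp * ‖a - b‖
        = (1 + 2 * μp) * (‖a - b‖ / (1 + 3 * μp)) := by unfold gapFactor; ring
      _ ≤ (1 + 2 * μp) * ‖b - c‖ := by gcongr
      _ = ‖update θ μm μp b c - update θ μm μp c b‖ := (norm_update_sub_update_of_lt hμp h).symm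

end Deffuant

theorem stmt_7_general {E : Type*} [SeminormedAddCommGroup E] [NormedSpace ℝ E] {θ μm μp : ℝ}
    (hμm : 0 ≤ μm) (hμp : 0 < μp) {a b c b'' c'' : E}
    (hab : (3 + 1 / μp) * μm * θ ≤ ‖a - b‖)
    (hatt : ‖b - c‖ ≤ θ → b'' = b + μm • (c - b) ∧ c'' = c + μm • (b - c))
    (hrep : θ < ‖b - c‖ → b'' = b - μp • (c - b) ∧ c'' = c - μp • (b - c)) :
    (1 + 2 * μp) / (1 + 3 * μp) * ‖a - b‖ ≤ max ‖a - b''‖ ‖b'' - c''‖ := by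
  obtain ⟨rfl, rfl⟩ := Deffuant.eq_update_and_eq_update_iff.mpr ⟨hatt, hrep⟩
  rcases le_or_gt ‖b - c‖ θ with h | h
  · exact le_max_of_le_left (Deffuant.gapFactor_mul_norm_sub_le_of_le hμm hμp h hab)
  · exact Deffuant.gapFactor_mul_norm_sub_le_max_of_lt hμp.le h

/-- Lemma 3.5 (deterministic content): with `ρ₋ = (1 + 2μ₊)/(1 + 3μ₊)` and
`D = (3 + 1/μ₊)μ₋θ`, if `|a - b| > D` and `(b'', c'')` is the result of one Deffuant
interaction with attraction (`|b - c| ≤ θ`) and repulsion (`|b - c| > θ`) between `b` and `c`,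
then `max(|a - b''|, |b'' - c''|) ≥ ρ₋ |a - b|`. -/
theorem stmt_7 (θ μm μp : ℝ) (hθ : 0 < θ) (hμm : 0 < μm) (hμp : 0 < μp)
    (ρm D : ℝ) (hρm : ρm = (1 + 2*μp) / (1 + 3*μp)) (hD : D = (3 + 1/μp) * μm * θ)
    (a b c b'' c'' : ℝ) (hab : D < |a - b|)
    (hatt : |b - c| ≤ θ → b'' = b + μm * (c - b) ∧ c'' = c + μm * (b - c))
    (hrep : θ < |b - c| → b'' = b - μp * (c - b) ∧ c'' = c - μp * (b - c)) :
    ρm * |a - b| ≤ max |a - b''| |b'' - c''| := by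
  subst hρm hD
  exact stmt_7_general (E := ℝ) hμm.le hμp hab.le hatt hrep
end

section
/- Let μ₊ > 0, θ > 0, c₀ ≥ θ/2, and ε > 0. Set c₊ = (2μ₊ + 1)(c₀ + ε), I_ε = [-c₀ - 2ε, -c₀] ∪ [c₀, c₀ + 2ε], and J_ε = [-2μ₊(c₀ + ε) - ε/(1 + 1/μ₊), -2μ₊(c₀ + ε) + ε/(1 + 1/μ₊)]. Then for every b ∈ J_ε one has: c₊ + b ∈ I_ε, c₊ + b + b/μ₊ ∈ I_ε, and |b| > θμ₊ (so b ∉ [-θμ₊, θμ₊]). -/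
/-!
Write `m = c₀ + ε` for the centre of the right half of `I_ε`. The affine maps `b ↦ c₊ + b` and
`b ↦ c₊ + b + b/μ₊` have slopes `1` and `1 + 1/μ₊`, and they send the centre `-2μ₊m` of `J_ε` to `m`
and `-m` respectively. Hence they carry `J_ε`, whose radius is `ε/(1 + 1/μ₊)`, into the balls of
radius `ε` about `m` and `-m`, which are the two halves of `I_ε`. Finally `J_ε` has radius at most
`μ₊ε`, so its points have absolute value at least `2μ₊m - μ₊ε = μ₊(2c₀ + ε) > μ₊θ`.
-/

namespace DeffuantRepulsion

open Metric

variable {E : Type*} [SeminormedAddCommGroup E] [NormedSpace ℝ E] {μ ε : ℝ} {m b : E}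

theorem one_add_inv_mul_norm_add_le (hμ : 0 < μ)
    (hb : b ∈ closedBall (-(2 * μ) • m) (ε / (1 + 1 / μ))) :
    (1 + 1 / μ) * ‖b + (2 * μ) • m‖ ≤ ε := by
  rwa [mem_closedBall_iff_norm, neg_smul, sub_neg_eq_add, le_div_iff₀' (by positivity)] at hb

theorem smul_add_mem_closedBall (hμ : 0 < μ)
    (hb : b ∈ closedBall (-(2 * μ) • m) (ε / (1 + 1 / μ))) :
    (2 * μ + 1) • m + b ∈ closedBall m ε := by
  have one_le_slope : 1 ≤ 1 + 1 / μ := le_add_of_nonneg_right (by positivity)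
  rw [mem_closedBall_iff_norm]
  calc ‖(2 * μ + 1) • m + b - m‖ = ‖b + (2 * μ) • m‖ := by congr 1; module
    _ ≤ (1 + 1 / μ) * ‖b + (2 * μ) • m‖ := le_mul_of_one_le_left (norm_nonneg _) one_le_slope
    _ ≤ ε := one_add_inv_mul_norm_add_le hμ hb

theorem smul_add_add_inv_smul_mem_closedBall_neg (hμ : 0 < μ)
    (hb : b ∈ closedBall (-(2 * μ) • m) (ε / (1 + 1 / μ))) :
    (2 * μ + 1) • m + b + μ⁻¹ • b ∈ closedBall (-m) ε := by
  have offset : (2 * μ + 1) • m + b + μ⁻¹ • b - -m = (1 + 1 / μ) • (b + (2 * μ) • m) := by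
    match_scalars <;> field_simp
    ring
  rw [mem_closedBall_iff_norm, offset, norm_smul_of_nonneg (by positivity)]
  exact one_add_inv_mul_norm_add_le hμ hb

theorem mul_two_mul_norm_sub_le_norm (hμ : 0 < μ)
    (hb : b ∈ closedBall (-(2 * μ) • m) (ε / (1 + 1 / μ))) :
    μ * (2 * ‖m‖ - ε) ≤ ‖b‖ := by
  have norm_offset_le : ‖b + (2 * μ) • m‖ ≤ μ * ε := by
    rw [← div_le_iff₀' hμ]
    calc ‖b + (2 * μ) • m‖ / μ ≤ (1 + 1 / μ) * ‖b + (2 * μ) • m‖ := by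
          rw [add_mul, one_mul, one_div_mul_eq_div]
          exact le_add_of_nonneg_left (norm_nonneg _)
      _ ≤ ε := one_add_inv_mul_norm_add_le hμ hb
  have triangle : 2 * μ * ‖m‖ ≤ ‖b + (2 * μ) • m‖ + ‖b‖ := by
    rw [← norm_smul_of_nonneg (by positivity)]
    simpa only [add_sub_cancel_left] using norm_sub_le (b + (2 * μ) • m) b
  linarith

end DeffuantRepulsion

theorem stmt_14_general {E : Type*} [SeminormedAddCommGroup E] [NormedSpace ℝ E] {μ θ ε : ℝ}
    {m b : E} (hμ : 0 < μ) (hθ : θ < 2 * ‖m‖ - ε)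
    (hb : b ∈ Metric.closedBall (-(2 * μ) • m) (ε / (1 + 1 / μ))) :
    (2 * μ + 1) • m + b ∈ Metric.closedBall m ε ∧
      (2 * μ + 1) • m + b + μ⁻¹ • b ∈ Metric.closedBall (-m) ε ∧ θ * μ < ‖b‖ := by
  refine ⟨DeffuantRepulsion.smul_add_mem_closedBall hμ hb,
    DeffuantRepulsion.smul_add_add_inv_smul_mem_closedBall_neg hμ hb, ?_⟩
  calc θ * μ = μ * θ := mul_comm θ μ
    _ < μ * (2 * ‖m‖ - ε) := mul_lt_mul_of_pos_left hθ hμ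
    _ ≤ ‖b‖ := DeffuantRepulsion.mul_two_mul_norm_sub_le_norm hμ hb

/-- Mean-field computation: with `c₊ = (2μ₊ + 1)(c₀ + ε)`,
`I_ε = [-c₀ - 2ε, -c₀] ∪ [c₀, c₀ + 2ε]` and
`J_ε = [-2μ₊(c₀ + ε) - ε/(1 + 1/μ₊), -2μ₊(c₀ + ε) + ε/(1 + 1/μ₊)]`, every `b ∈ J_ε`
satisfies `c₊ + b ∈ I_ε`, `c₊ + b + b/μ₊ ∈ I_ε` and `|b| > θμ₊`. -/
theorem stmt_14 (μp θ c₀ ε : ℝ) (hμp : 0 < μp) (hθ : 0 < θ) (hc₀ : θ/2 ≤ c₀) (hε : 0 < ε)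
    (cP : ℝ) (hcP : cP = (2*μp + 1) * (c₀ + ε))
    (Iε : Set ℝ)
    (hI : Iε = Set.Icc (-c₀ - 2*ε) (-c₀) ∪ Set.Icc c₀ (c₀ + 2*ε))
    (Jε : Set ℝ)
    (hJ : Jε = Set.Icc (-(2*μp)*(c₀ + ε) - ε/(1 + 1/μp)) (-(2*μp)*(c₀ + ε) + ε/(1 + 1/μp))) :
    ∀ b ∈ Jε, cP + b ∈ Iε ∧ cP + b + b/μp ∈ Iε ∧ θ*μp < |b| := by
  have right_half : Set.Icc c₀ (c₀ + 2 * ε) = Metric.closedBall (c₀ + ε) ε := by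
    rw [Real.closedBall_eq_Icc]; congr 1 <;> ring
  have left_half : Set.Icc (-c₀ - 2 * ε) (-c₀) = Metric.closedBall (-(c₀ + ε)) ε := by
    rw [Real.closedBall_eq_Icc]; congr 1 <;> ring
  have threshold_lt : θ < 2 * ‖c₀ + ε‖ - ε := by linarith [Real.le_norm_self (c₀ + ε)]
  intro b hb
  rw [hJ, ← Real.closedBall_eq_Icc] at hb
  obtain ⟨hfst, hsnd, hlarge⟩ := stmt_14_general hμp threshold_lt hb
  rw [smul_eq_mul, ← hcP] at hfst hsnd
  rw [smul_eq_mul, ← div_eq_inv_mul] at hsnd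
  rw [hI, right_half, left_half]
  exact ⟨Or.inr hfst, Or.inl hsnd, hlarge⟩
end
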